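/- Let V be an n-dimensional complex vector space with a nondegenerate Hermitian form ω of signature (p, n−p), let k ≤ n, and set l = min{p, n−p}. The number of orbits of SU(V, ω) on the Grassmannian Gr(k, V) equals (n−k+1)(n−k+2)/2 if n−l ≤ k, equals (l+1)(l+2)/2 if l ≤ k ≤ n−l, and equals (k+1)(k+2)/2 if k ≤ l. -/

import Mathlib

open Module Submodule

noncomputable section

variable {V : Type} [AddCommGroup V] [Module ℂ V]

/-- A sesquilinear form is Hermitian. -/
def IsHermitianForm (ω : V →ₗ⋆[ℂ] V →ₗ[ℂ] ℂ) : Prop :=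
  ∀ x y, ω x y = star (ω y x)

/-- Nondegeneracy of a sesquilinear form. -/
def IsNondeg (ω : V →ₗ⋆[ℂ] V →ₗ[ℂ] ℂ) : Prop :=
  ∀ x, (∀ y, ω x y = 0) → x = 0

/-- The orthogonal complement (in all of `V`) of a subspace with respect to `ω`. -/
def perp (ω : V →ₗ⋆[ℂ] V →ₗ[ℂ] ℂ) (U : Submodule ℂ V) : Submodule ℂ V where
  carrier := {v | ∀ u ∈ U, ω v u = 0}
  add_mem' := by
    intro a b ha hb u hu
    simp [ha u hu, hb u hu]
  zero_mem' := by
    intro u hu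
    simp
  smul_mem' := by
    intro c a ha u hu
    simp [LinearMap.map_smulₛₗ, ha u hu]

/-- `ω` is positive definite on the subspace `W`. -/
def PosDefOn (ω : V →ₗ⋆[ℂ] V →ₗ[ℂ] ℂ) (W : Submodule ℂ V) : Prop :=
  ∀ x ∈ W, x ≠ 0 → 0 < (ω x x).re

/-- `ω` is negative definite on the subspace `W`. -/
def NegDefOn (ω : V →ₗ⋆[ℂ] V →ₗ[ℂ] ℂ) (W : Submodule ℂ V) : Prop :=
  ∀ x ∈ W, x ≠ 0 → (ω x x).re < 0

/-- Signature `(a,b,c)` of `ω` restricted to `U`. -/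
def HasSignature (ω : V →ₗ⋆[ℂ] V →ₗ[ℂ] ℂ) (U : Submodule ℂ V) (a b c : ℕ) : Prop :=
  IsGreatest {d | ∃ W : Submodule ℂ V, W ≤ U ∧ PosDefOn ω W ∧ finrank ℂ W = d} a ∧
  IsGreatest {d | ∃ W : Submodule ℂ V, W ≤ U ∧ NegDefOn ω W ∧ finrank ℂ W = d} b ∧
  finrank ℂ (U ⊓ perp ω U : Submodule ℂ V) = c

/-- Two `k`-dimensional subspaces lie in the same orbit of `SU(V, ω)` (the group of
`ω`-isometries of determinant `1`). -/
def SameSUOrbit (ω : V →ₗ⋆[ℂ] V →ₗ[ℂ] ℂ) (k : ℕ)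
    (A B : {U : Submodule ℂ V // finrank ℂ U = k}) : Prop :=
  ∃ φ : V ≃ₗ[ℂ] V, (∀ x y, ω (φ x) (φ y) = ω x y) ∧
    LinearMap.det (φ : V →ₗ[ℂ] V) = 1 ∧
    Submodule.map (φ : V →ₗ[ℂ] V) A.1 = B.1

/-- The family `u` is `ω`-orthogonal, with `ω (u i) (u i) = ε i`. -/
structure IsOrthoFamily {ι : Type} (ω : V →ₗ⋆[ℂ] V →ₗ[ℂ] ℂ) (ε : ι → ℝ) (u : ι → V) : Prop where
  self : ∀ i, ω (u i) (u i) = ε i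
  ortho : ∀ i j, i ≠ j → ω (u i) (u j) = 0

/-- The sign function on a disjoint union: `1` on the left, `-1` on the right. -/
def sumSign {A B : Type} : A ⊕ B → ℝ := Sum.elim (fun _ => 1) (fun _ => -1)

variable {ω : V →ₗ⋆[ℂ] V →ₗ[ℂ] ℂ}

lemma IsOrthoFamily.comp {ι κ : Type} {ε : ι → ℝ} {u : ι → V} (h : IsOrthoFamily ω ε u)
    {g : κ → ι} (hg : Function.Injective g) : IsOrthoFamily ω (ε ∘ g) (u ∘ g) :=
  ⟨fun i => h.self (g i), fun _ _ hij => h.ortho _ _ (hg.ne hij)⟩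

lemma IsHermitianForm.apply_eq_zero (hω : IsHermitianForm ω) {x y : V} (h : ω x y = 0) :
    ω y x = 0 := by
  rw [hω, h, star_zero]

lemma IsOrthoFamily.sumElim {ι κ : Type} {ε : ι → ℝ} {u : ι → V} {δ : κ → ℝ} {v : κ → V}
    (hω : IsHermitianForm ω) (hu : IsOrthoFamily ω ε u) (hv : IsOrthoFamily ω δ v)
    (h : ∀ i j, ω (u i) (v j) = 0) :
    IsOrthoFamily ω (Sum.elim ε δ) (Sum.elim u v) := by
  refine ⟨?_, ?_⟩
  · rintro (i | i)
    · exact hu.self i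
    · exact hv.self i
  · rintro (i | i) (j | j) hij
    · exact hu.ortho i j (by simpa using hij)
    · exact h i j
    · exact hω.apply_eq_zero (h j i)
    · exact hv.ortho i j (by simpa using hij)

lemma IsOrthoFamily.apply_sum_right {ι : Type} [Fintype ι] {ε : ι → ℝ} {u : ι → V}
    (h : IsOrthoFamily ω ε u) (i : ι) (d : ι → ℂ) :
    ω (u i) (∑ j, d j • u j) = d i * ε i := by
  rw [map_sum, Finset.sum_eq_single i]
  · simp [h.self]
  · intro j _ hj
    simp [h.ortho i j hj.symm]
  · simp

lemma IsOrthoFamily.apply_sum_sum {ι : Type} [Fintype ι] {ε : ι → ℝ} {u : ι → V}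
    (h : IsOrthoFamily ω ε u) (c d : ι → ℂ) :
    ω (∑ i, c i • u i) (∑ j, d j • u j) = ∑ i, star (c i) * (ε i * d i) := by
  rw [map_sum ω, LinearMap.sum_apply]
  refine Finset.sum_congr rfl fun i _ => ?_
  rw [LinearMap.map_smulₛₗ ω, LinearMap.smul_apply, h.apply_sum_right]
  simp [mul_comm]

lemma IsOrthoFamily.re_apply_sum {ι : Type} [Fintype ι] {ε : ι → ℝ} {u : ι → V}
    (h : IsOrthoFamily ω ε u) (c : ι → ℂ) :
    (ω (∑ i, c i • u i) (∑ i, c i • u i)).re = ∑ i, ε i * Complex.normSq (c i) := by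
  rw [h.apply_sum_sum, Complex.re_sum]
  refine Finset.sum_congr rfl fun i _ => ?_
  simp [Complex.normSq_apply]
  ring

lemma linearIndependent_of_dual {ι : Type} [Fintype ι] {t u : ι → V}
    (h0 : ∀ i j, i ≠ j → ω (t i) (u j) = 0) (h1 : ∀ i, ω (t i) (u i) ≠ 0) :
    LinearIndependent ℂ u := by
  rw [Fintype.linearIndependent_iff]
  intro g hg i
  have := congrArg (ω (t i)) hg
  rw [map_sum, Finset.sum_eq_single i] at this
  · simpa [h1 i] using this
  · intro j _ hj
    simp [h0 i j hj.symm]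
  · simp

lemma IsOrthoFamily.linearIndependent {ι : Type} [Fintype ι] {ε : ι → ℝ} {u : ι → V}
    (h : IsOrthoFamily ω ε u) (hε : ∀ i, ε i ≠ 0) : LinearIndependent ℂ u :=
  linearIndependent_of_dual h.ortho fun i => by simpa [h.self] using hε i

/-- The subspace of vectors orthogonal to a family. -/
def familyPerp {ι : Type} (ω : V →ₗ⋆[ℂ] V →ₗ[ℂ] ℂ) (u : ι → V) : Submodule ℂ V :=
  ⨅ i, LinearMap.ker (ω (u i))

lemma mem_familyPerp {ι : Type} {u : ι → V} {x : V} :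
    x ∈ familyPerp ω u ↔ ∀ i, ω (u i) x = 0 := by
  simp [familyPerp]

lemma IsOrthoFamily.span_sup_familyPerp {ι : Type} [Fintype ι] {ε : ι → ℝ} {u : ι → V}
    (h : IsOrthoFamily ω ε u) (hε : ∀ i, ε i ≠ 0) :
    span ℂ (Set.range u) ⊔ familyPerp ω u = ⊤ := by
  rw [eq_top_iff]
  intro x _
  rw [mem_sup]
  refine ⟨∑ i, (ω (u i) x / ε i) • u i, ?_, x - ∑ i, (ω (u i) x / ε i) • u i, ?_, by simp⟩
  · exact sum_mem fun i _ => smul_mem _ _ (subset_span ⟨i, rfl⟩)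
  · rw [mem_familyPerp]
    intro i
    have : (ε i : ℂ) ≠ 0 := by exact_mod_cast hε i
    rw [map_sub, h.apply_sum_right]
    field_simp
    simp

lemma IsHermitianForm.apply_self (hω : IsHermitianForm ω) (x : V) :
    ω x x = ((ω x x).re : ℂ) := by
  have h := hω x x
  exact (Complex.conj_eq_iff_re.mp h.symm).symm

lemma apply_eq_zero_of_apply_self_eq_zero {D : Submodule ℂ V}
    (h : ∀ x ∈ D, ω x x = 0) : ∀ x ∈ D, ∀ y ∈ D, ω x y = 0 := by
  intro x hx y hy
  have h1 := h (x + y) (D.add_mem hx hy)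
  have h2 := h (x + Complex.I • y) (D.add_mem hx (D.smul_mem _ hy))
  simp only [map_add, LinearMap.add_apply, LinearMap.map_smulₛₗ, LinearMap.smul_apply, h x hx,
    h y hy, smul_eq_mul, Complex.conj_I, RingHom.id_apply] at h1 h2
  have h3 : Complex.I * (ω x y - ω y x) = 0 := by linear_combination h2
  have h4 := (mul_eq_zero.mp h3).resolve_left Complex.I_ne_zero
  linear_combination (h1 + h4) / 2

lemma IsHermitianForm.exists_normalized (hω : IsHermitianForm ω) {x : V} (hx : ω x x ≠ 0) :
    ∃ c : ℂ, ∃ ε : ℝ, (ε = 1 ∨ ε = -1) ∧ ω (c • x) (c • x) = ε := by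
  set t := (ω x x).re with ht
  have hxt : ω x x = t := hω.apply_self x
  have ht0 : t ≠ 0 := fun h => hx (by rw [hxt, h]; simp)
  have habs : 0 < |t| := abs_pos.mpr ht0
  refine ⟨((√|t|)⁻¹ : ℝ), t / |t|, ?_, ?_⟩
  · rcases lt_or_gt_of_ne ht0 with h | h
    · right; rw [abs_of_neg h]; field_simp
    · left; rw [abs_of_pos h]; field_simp
  · rw [LinearMap.map_smulₛₗ ω, LinearMap.smul_apply, LinearMap.map_smul, hxt]
    simp only [Complex.conj_ofReal, smul_eq_mul]
    norm_cast
    have := Real.mul_self_sqrt habs.le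
    have h0 : √|t| ≠ 0 := (Real.sqrt_pos.mpr habs).ne'
    rw [← this]
    field_simp
    simp

lemma IsOrthoFamily.cons (hω : IsHermitianForm ω) {m : ℕ} {ε : Fin m → ℝ} {v : Fin m → V}
    (h : IsOrthoFamily ω ε v) {u : V} {δ : ℝ} (hu : ω u u = δ) (huv : ∀ i, ω u (v i) = 0) :
    IsOrthoFamily ω (Fin.cons δ ε : Fin (m + 1) → ℝ) (Fin.cons u v : Fin (m + 1) → V) := by
  refine ⟨?_, ?_⟩
  · intro i
    cases i using Fin.cases with
    | zero => simpa using hu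
    | succ i => simpa using h.self i
  · intro i j hij
    cases i using Fin.cases with
    | zero =>
      cases j using Fin.cases with
      | zero => exact absurd rfl hij
      | succ j => simpa using huv j
    | succ i =>
      cases j using Fin.cases with
      | zero => simpa using hω.apply_eq_zero (huv i)
      | succ j => simpa using h.ortho i j (by simpa using hij)

/-- Orthogonal decomposition of a subspace into an orthonormal family and a totally isotropic
subspace. -/
lemma IsHermitianForm.exists_orthoFamily [FiniteDimensional ℂ V] (hω : IsHermitianForm ω) (N : ℕ) :
    ∀ D : Submodule ℂ V, finrank ℂ D ≤ N →
    ∃ (m : ℕ) (ε : Fin m → ℝ) (v : Fin m → V), (∀ i, ε i = 1 ∨ ε i = -1) ∧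
      IsOrthoFamily ω ε v ∧ (∀ i, v i ∈ D) ∧
      ∃ R ≤ D, (∀ x ∈ R, ∀ y ∈ R, ω x y = 0) ∧ (∀ x ∈ R, ∀ i, ω (v i) x = 0) ∧
        D ≤ span ℂ (Set.range v) ⊔ R := by
  induction N with
  | zero =>
    intro D hD
    have hD0 : D = ⊥ := by
      rw [← Submodule.finrank_eq_zero (R := ℂ)]; omega
    refine ⟨0, Fin.elim0, Fin.elim0, fun i => i.elim0, ⟨fun i => i.elim0, fun i => i.elim0⟩,
      fun i => i.elim0, D, le_rfl, ?_, fun _ _ i => i.elim0, le_sup_right⟩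
    subst hD0
    intro x hx
    simp [(mem_bot ℂ).mp hx]
  | succ N ih =>
    intro D hD
    by_cases hiso : ∀ x ∈ D, ω x x = 0
    · exact ⟨0, Fin.elim0, Fin.elim0, fun i => i.elim0, ⟨fun i => i.elim0, fun i => i.elim0⟩,
        fun i => i.elim0, D, le_rfl, apply_eq_zero_of_apply_self_eq_zero hiso, fun _ _ i => i.elim0, le_sup_right⟩
    push Not at hiso
    obtain ⟨x, hxD, hx⟩ := hiso
    obtain ⟨c, δ, hδ, hc⟩ := hω.exists_normalized hx
    set u := c • x with hu
    have huD : u ∈ D := D.smul_mem _ hxD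
    have hδ0 : (δ : ℂ) ≠ 0 := by rcases hδ with rfl | rfl <;> simp
    have hlt : D ⊓ LinearMap.ker (ω u) < D := by
      refine lt_of_le_of_ne inf_le_left fun h => ?_
      have : u ∈ D ⊓ LinearMap.ker (ω u) := h.symm ▸ huD
      exact hδ0 (hc ▸ LinearMap.mem_ker.mp this.2)
    obtain ⟨m, ε, v, hε, hv, hvD, R, hRD, hR, hvR, hle⟩ :=
      ih (D ⊓ LinearMap.ker (ω u)) (by have := finrank_lt_finrank_of_lt hlt; omega)
    refine ⟨m + 1, Fin.cons δ ε, Fin.cons u v, ?_,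
      hv.cons hω hc fun i => LinearMap.mem_ker.mp (hvD i).2, ?_, R, hRD.trans inf_le_left, hR, ?_, ?_⟩
    · intro i
      cases i using Fin.cases with
      | zero => simpa using hδ
      | succ i => simpa using hε i
    · intro i
      cases i using Fin.cases with
      | zero => simpa using huD
      | succ i => simpa using (hvD i).1
    · intro y hy i
      cases i using Fin.cases with
      | zero => simpa using LinearMap.mem_ker.mp (hRD hy).2
      | succ i => simpa using hvR y hy i
    · intro y hy
      have hy' : y - (ω u y / δ) • u ∈ D ⊓ LinearMap.ker (ω u) := by
        refine ⟨D.sub_mem hy (D.smul_mem _ huD), ?_⟩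
        rw [SetLike.mem_coe, LinearMap.mem_ker, map_sub, LinearMap.map_smul, hc, smul_eq_mul]
        field_simp
        simp
      have hspan : span ℂ (Set.range v) ⊔ R ≤
          span ℂ (Set.range (Fin.cons u v : Fin (m + 1) → V)) ⊔ R := by
        refine sup_le_sup_right (span_mono ?_) _
        rintro _ ⟨i, rfl⟩
        exact ⟨i.succ, by simp⟩
      have h1 := hspan (hle hy')
      have h2 : (ω u y / δ) • u ∈ span ℂ (Set.range (Fin.cons u v : Fin (m + 1) → V)) ⊔ R :=
        smul_mem _ _ (mem_sup_left (subset_span ⟨0, by simp⟩))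
      simpa using add_mem h1 h2

lemma IsOrthoFamily.exists_sumSign {ι : Type} [Fintype ι] {ε : ι → ℝ} {v : ι → V}
    (h : IsOrthoFamily ω ε v) (hε : ∀ i, ε i = 1 ∨ ε i = -1) :
    ∃ (a b : ℕ) (w : Fin a ⊕ Fin b → V), IsOrthoFamily ω sumSign w ∧
      Set.range w = Set.range v := by
  classical
  let f := (Fintype.equivFin {i // ε i = 1}).symm
  let g := (Fintype.equivFin {i // ε i = -1}).symm
  let r : Fin (Fintype.card {i // ε i = 1}) ⊕ Fin (Fintype.card {i // ε i = -1}) → ι :=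
    Sum.elim (fun i => (f i).1) (fun i => (g i).1)
  have hs : ε ∘ r = sumSign := by
    funext i
    rcases i with i | i
    · exact (f i).2
    · exact (g i).2
  have hr : Function.Injective r := by
    rintro (i | i) (j | j) hij
    · exact congrArg _ (f.injective (Subtype.ext hij))
    · have h1 := (f i).2
      have h2 := (g j).2
      rw [show (f i).1 = (g j).1 from hij] at h1
      linarith
    · have h1 := (g i).2
      have h2 := (f j).2
      rw [show (g i).1 = (f j).1 from hij] at h1
      linarith
    · exact congrArg _ (g.injective (Subtype.ext hij))
  have hr' : Function.Surjective r := by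
    intro i
    rcases hε i with hi | hi
    · exact ⟨Sum.inl (f.symm ⟨i, hi⟩), by simp [r]⟩
    · exact ⟨Sum.inr (g.symm ⟨i, hi⟩), by simp [r]⟩
  exact ⟨_, _, v ∘ r, hs ▸ h.comp hr, hr'.range_comp v⟩

/-- An orthonormal family of a nondegenerate form extends to an orthonormal basis. -/
lemma IsOrthoFamily.exists_extension [FiniteDimensional ℂ V] (hω : IsHermitianForm ω)
    (hnd : IsNondeg ω) {ι : Type} [Fintype ι] {ε : ι → ℝ} {v : ι → V}
    (h : IsOrthoFamily ω ε v) (hε : ∀ i, ε i ≠ 0) :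
    ∃ (a b : ℕ) (w : Fin a ⊕ Fin b → V), IsOrthoFamily ω sumSign w ∧
      (∀ i j, ω (v i) (w j) = 0) ∧ familyPerp ω v = span ℂ (Set.range w) := by
  obtain ⟨m, δ, w, hδ, hw, hwD, R, hRD, hR, hwR, hle⟩ :=
    hω.exists_orthoFamily (finrank ℂ (familyPerp ω v)) (familyPerp ω v) le_rfl
  have hR0 : R = ⊥ := by
    rw [eq_bot_iff]
    intro x hx
    refine (mem_bot ℂ).mpr (hnd x fun y => hω.apply_eq_zero ?_)
    suffices hy : y ∈ LinearMap.ker (ω x) from hω.apply_eq_zero (LinearMap.mem_ker.mp hy)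
    have h1 : span ℂ (Set.range v) ≤ LinearMap.ker (ω x) := by
      rw [span_le]
      rintro _ ⟨i, rfl⟩
      exact hω.apply_eq_zero (mem_familyPerp.mp (hRD hx) i)
    have h2 : span ℂ (Set.range w) ≤ LinearMap.ker (ω x) := by
      rw [span_le]
      rintro _ ⟨i, rfl⟩
      exact hω.apply_eq_zero (hwR x hx i)
    have h3 : R ≤ LinearMap.ker (ω x) := fun y hy => hR x hx y hy
    have h4 := sup_le h1 (hle.trans (sup_le h2 h3))
    rw [h.span_sup_familyPerp hε] at h4
    exact h4 mem_top
  obtain ⟨a, b, w', hw', hrange⟩ := hw.exists_sumSign hδ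
  have hw'D : ∀ j, w' j ∈ familyPerp ω v := by
    intro j
    obtain ⟨i, hi⟩ : w' j ∈ Set.range w := hrange ▸ ⟨j, rfl⟩
    exact hi ▸ hwD i
  refine ⟨a, b, w', hw', fun i j => mem_familyPerp.mp (hw'D j) i, le_antisymm ?_ ?_⟩
  · simpa [hR0, hrange] using hle
  · rw [span_le]
    rintro _ ⟨i, rfl⟩
    exact hw'D i

lemma IsOrthoFamily.neg {ι : Type} {ε : ι → ℝ} {u : ι → V} (h : IsOrthoFamily ω ε u) :
    IsOrthoFamily (-ω) (-ε) u :=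
  ⟨fun i => by simp [h.self], fun i j hij => by simp [h.ortho i j hij]⟩

lemma negDefOn_iff {W : Submodule ℂ V} : NegDefOn ω W ↔ PosDefOn (-ω) W := by
  simp [NegDefOn, PosDefOn]

lemma IsOrthoFamily.posDefOn_span {ι : Type} [Fintype ι] {ε : ι → ℝ} {u : ι → V}
    (h : IsOrthoFamily ω ε u) (hε : ∀ i, 0 < ε i) : PosDefOn ω (span ℂ (Set.range u)) := by
  intro x hx hx0
  obtain ⟨c, rfl⟩ := (mem_span_range_iff_exists_fun ℂ).mp hx
  rw [h.re_apply_sum]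
  refine Finset.sum_pos' (fun i _ => mul_nonneg (hε i).le (Complex.normSq_nonneg _)) ?_
  by_contra! hc
  refine hx0 (Finset.sum_eq_zero fun i hi => ?_)
  have h1 : Complex.normSq (c i) ≤ 0 := nonpos_of_mul_nonpos_right (hc i hi) (hε i)
  rw [Complex.normSq_eq_zero.mp (le_antisymm h1 (Complex.normSq_nonneg _)), zero_smul]

lemma IsOrthoFamily.re_apply_self_nonpos {ι : Type} [Fintype ι] {ε : ι → ℝ} {u : ι → V}
    (h : IsOrthoFamily ω ε u) (hε : ∀ i, ε i ≤ 0) {x : V} (hx : x ∈ span ℂ (Set.range u)) :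
    (ω x x).re ≤ 0 := by
  obtain ⟨c, rfl⟩ := (mem_span_range_iff_exists_fun ℂ).mp hx
  rw [h.re_apply_sum]
  exact Finset.sum_nonpos fun i _ =>
    mul_nonpos_of_nonpos_of_nonneg (hε i) (Complex.normSq_nonneg _)

lemma PosDefOn.eq_zero {W : Submodule ℂ V} (h : PosDefOn ω W) {x : V} (hx : x ∈ W)
    (h0 : (ω x x).re ≤ 0) : x = 0 := by
  by_contra hne
  exact absurd (h x hx hne) h0.not_gt

lemma apply_eq_zero_of_mem_span {ι κ : Type} {u : ι → V} {v : κ → V}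
    (h : ∀ i j, ω (u i) (v j) = 0) {x y : V} (hx : x ∈ span ℂ (Set.range u))
    (hy : y ∈ span ℂ (Set.range v)) : ω x y = 0 := by
  have h1 : ∀ i, ω (u i) y = 0 := by
    intro i
    have : span ℂ (Set.range v) ≤ LinearMap.ker (ω (u i)) := by
      rw [span_le]
      rintro _ ⟨j, rfl⟩
      exact h i j
    exact this hy
  induction hx using span_induction with
  | mem x hx => obtain ⟨i, rfl⟩ := hx; exact h1 i
  | zero => simp
  | add x z _ _ hx hz => simp [hx, hz]
  | smul c x _ hx => simp [LinearMap.map_smulₛₗ, hx]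

/-- Maximal dimension of a positive definite subspace of `U`. -/
def posIndex (ω : V →ₗ⋆[ℂ] V →ₗ[ℂ] ℂ) (U : Submodule ℂ V) : ℕ :=
  sSup {d | ∃ W : Submodule ℂ V, W ≤ U ∧ PosDefOn ω W ∧ finrank ℂ W = d}

/-- Sylvester's law of inertia. -/
lemma IsOrthoFamily.posIndex_eq [FiniteDimensional ℂ V] {ι : Type} [Fintype ι] {ε : ι → ℝ}
    {u : ι → V} (h : IsOrthoFamily ω ε u) (hu : LinearIndependent ℂ u) :
    posIndex ω (span ℂ (Set.range u)) = ∑ i, if 0 < ε i then 1 else 0 := by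
  classical
  refine IsGreatest.csSup_eq ?_
  rw [← Finset.card_filter, ← Fintype.card_subtype]
  have hsub : ∀ s : ι → Prop, span ℂ (Set.range fun i : {i // s i} => u i) ≤
      span ℂ (Set.range u) := fun s => span_mono (by rintro _ ⟨i, rfl⟩; exact ⟨i, rfl⟩)
  have hrank : ∀ s : ι → Prop, finrank ℂ (span ℂ (Set.range fun i : {i // s i} => u i)) =
      Fintype.card {i // s i} := fun s =>
    finrank_span_eq_card (hu.comp _ Subtype.val_injective)
  refine ⟨⟨_, hsub _, (h.comp Subtype.val_injective).posDefOn_span fun i => i.2, hrank _⟩, ?_⟩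
  rintro _ ⟨W, hWU, hW, rfl⟩
  set N := span ℂ (Set.range fun i : {i // ¬ 0 < ε i} => u i) with hN
  have hWN : W ⊓ N = ⊥ := by
    rw [eq_bot_iff]
    intro x hx
    exact (mem_bot ℂ).mpr (hW.eq_zero hx.1
      ((h.comp Subtype.val_injective).re_apply_self_nonpos (fun i => not_lt.mp i.2) hx.2))
  have h1 := finrank_sup_add_finrank_inf_eq W N
  have h2 := finrank_mono (sup_le hWU (hsub fun i => ¬ 0 < ε i))
  rw [finrank_span_eq_card hu] at h2
  rw [hWN, finrank_bot, add_zero, hN, hrank, Fintype.card_subtype_compl] at h1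
  have h4 := Fintype.card_subtype_le fun i => 0 < ε i
  omega

lemma posIndex_map (φ : V ≃ₗ[ℂ] V) (hφ : ∀ x y, ω (φ x) (φ y) = ω x y) (U : Submodule ℂ V) :
    posIndex ω (U.map (φ : V →ₗ[ℂ] V)) = posIndex ω U := by
  refine congrArg sSup (Set.ext fun d => ⟨?_, ?_⟩)
  · rintro ⟨W, hWU, hW, rfl⟩
    refine ⟨W.map (φ.symm : V →ₗ[ℂ] V), ?_, ?_, LinearEquiv.finrank_map_eq φ.symm W⟩
    · rintro _ ⟨x, hx, rfl⟩
      obtain ⟨y, hy, rfl⟩ := hWU hx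
      simpa using hy
    · rintro _ ⟨x, hx, rfl⟩ hx0
      have := hW x hx (by rintro rfl; simp at hx0)
      rw [← hφ]
      simpa using this
  · rintro ⟨W, hWU, hW, rfl⟩
    refine ⟨W.map (φ : V →ₗ[ℂ] V), map_mono hWU, ?_, LinearEquiv.finrank_map_eq φ W⟩
    rintro _ ⟨x, hx, rfl⟩ hx0
    have := hW x hx (by rintro rfl; simp at hx0)
    rw [← hφ] at this
    exact this

lemma IsOrthoFamily.exists_isometry {ι : Type} [Fintype ι] {ε : ι → ℝ} {v w : ι → V}
    (hv : IsOrthoFamily ω ε v) (hw : IsOrthoFamily ω ε w) (hε : ∀ i, ε i ≠ 0)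
    (hvt : span ℂ (Set.range v) = ⊤) (hwt : span ℂ (Set.range w) = ⊤) :
    ∃ φ : V ≃ₗ[ℂ] V, (∀ x y, ω (φ x) (φ y) = ω x y) ∧ ∀ i, φ (v i) = w i := by
  let b := Basis.mk (hv.linearIndependent hε) hvt.ge
  let b' := Basis.mk (hw.linearIndependent hε) hwt.ge
  have hb : ∀ i, b.equiv b' (Equiv.refl ι) (v i) = w i := by
    intro i
    have : v i = b i := by simp [b]
    rw [this, Basis.equiv_apply]
    simp [b']
  refine ⟨b.equiv b' (Equiv.refl ι), ?_, hb⟩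
  intro x y
  obtain ⟨c, rfl⟩ := (mem_span_range_iff_exists_fun ℂ).mp (hvt.ge (mem_top (x := x)))
  obtain ⟨d, rfl⟩ := (mem_span_range_iff_exists_fun ℂ).mp (hvt.ge (mem_top (x := y)))
  simp only [map_sum (b.equiv b' (Equiv.refl ι)), map_smul, hb]
  rw [hw.apply_sum_sum, hv.apply_sum_sum]

open Matrix in
lemma IsOrthoFamily.norm_det_eq_one {ι : Type} [Fintype ι] {ε : ι → ℝ} {v : ι → V}
    (hv : IsOrthoFamily ω ε v) (hε : ∀ i, ε i ≠ 0) (hvt : span ℂ (Set.range v) = ⊤)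
    {φ : V →ₗ[ℂ] V} (hφ : ∀ x y, ω (φ x) (φ y) = ω x y) : ‖LinearMap.det φ‖ = 1 := by
  classical
  let b := Basis.mk (hv.linearIndependent hε) hvt.ge
  have hb : ∀ i, b i = v i := fun i => by simp [b]
  set M := LinearMap.toMatrix b b φ with hM
  have hφv : ∀ j, φ (v j) = ∑ i, M i j • v i := by
    intro j
    rw [← hb j, ← b.sum_repr (φ (b j))]
    simp only [hM, LinearMap.toMatrix_apply, hb]
  have key : Mᴴ * (diagonal (fun i => (ε i : ℂ)) * M) = diagonal (fun i => (ε i : ℂ)) := by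
    ext i j
    rw [mul_apply]
    simp only [diagonal_mul, conjTranspose_apply]
    rw [← hv.apply_sum_sum (fun k => M k i) (fun k => M k j), ← hφv, ← hφv, hφ]
    by_cases hij : i = j
    · subst hij
      simp [hv.self]
    · simp [hij, hv.ortho i j hij]
  have hdet := congrArg Matrix.det key
  rw [det_mul, det_mul, det_conjTranspose, det_diagonal, hM, LinearMap.det_toMatrix] at hdet
  have hprod : (∏ i, (ε i : ℂ)) ≠ 0 :=
    Finset.prod_ne_zero_iff.mpr fun i _ => by exact_mod_cast hε i
  have h1 : star (LinearMap.det φ) * LinearMap.det φ = 1 := by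
    refine mul_right_cancel₀ hprod ?_
    linear_combination hdet
  have h2 := congrArg norm h1
  rw [norm_mul, norm_star, norm_one] at h2
  nlinarith [norm_nonneg (LinearMap.det φ)]

/-- An isometry can be rescaled to one of determinant one with the same action on subspaces. -/
lemma exists_special_isometry [FiniteDimensional ℂ V] (φ : V ≃ₗ[ℂ] V)
    (hφ : ∀ x y, ω (φ x) (φ y) = ω x y) (hdet : ‖LinearMap.det (φ : V →ₗ[ℂ] V)‖ = 1) :
    ∃ ψ : V ≃ₗ[ℂ] V, (∀ x y, ω (ψ x) (ψ y) = ω x y) ∧ LinearMap.det (ψ : V →ₗ[ℂ] V) = 1 ∧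
      ∀ U : Submodule ℂ V, U.map (ψ : V →ₗ[ℂ] V) = U.map (φ : V →ₗ[ℂ] V) := by
  rcases Nat.eq_zero_or_pos (finrank ℂ V) with h0 | hpos
  · exact ⟨φ, hφ, LinearMap.det_eq_one_of_finrank_eq_zero h0 _, fun _ => rfl⟩
  obtain ⟨μ, hμ⟩ := IsAlgClosed.exists_pow_nat_eq (LinearMap.det (φ : V →ₗ[ℂ] V))⁻¹ hpos
  have hμn : ‖μ‖ = 1 := by
    have := congrArg norm hμ
    rw [norm_pow, norm_inv, hdet, inv_one] at this
    exact (pow_eq_one_iff_of_nonneg (norm_nonneg _) hpos.ne').mp this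
  have hμ0 : μ ≠ 0 := by
    rintro rfl
    simp at hμn
  have hμμ : (starRingEnd ℂ) μ * μ = 1 := by
    rw [Complex.conj_mul', hμn]
    simp
  have hψ : ((φ.trans (LinearEquiv.smulOfNeZero ℂ V μ hμ0) : V ≃ₗ[ℂ] V) : V →ₗ[ℂ] V) =
      μ • (φ : V →ₗ[ℂ] V) := by
    ext x
    simp
  refine ⟨φ.trans (LinearEquiv.smulOfNeZero ℂ V μ hμ0), ?_, ?_, ?_⟩
  · intro x y
    have : ∀ z, (φ.trans (LinearEquiv.smulOfNeZero ℂ V μ hμ0)) z = μ • φ z := fun z => by simp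
    rw [this, this, LinearMap.map_smulₛₗ ω, LinearMap.smul_apply, LinearMap.map_smul, hφ,
      smul_smul, hμμ, one_smul]
  · have h : LinearMap.det (φ : V →ₗ[ℂ] V) ≠ 0 := by
      intro h
      simp [h] at hdet
    rw [hψ, LinearMap.det_smul, hμ, inv_mul_cancel₀ h]
  · intro U
    rw [hψ, Submodule.map_smul _ _ _ hμ0]

/-- The signs of a basis adapted to a subspace: orthonormal vectors in the subspace, pairs whose
sums span its radical, and the remaining vectors. -/
def adaptedSign {A B C A' B' : Type} : ((A ⊕ B) ⊕ (C ⊕ C)) ⊕ (A' ⊕ B') → ℝ :=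
  Sum.elim (Sum.elim sumSign sumSign) sumSign

/-- The basis of a subspace given by an adapted basis of the whole space. -/
def adaptedVec {A B C D : Type} (v : ((A ⊕ B) ⊕ (C ⊕ C)) ⊕ D → V) : (A ⊕ B) ⊕ C → V :=
  Sum.elim (fun i => v (.inl (.inl i)))
    (fun i => v (.inl (.inr (.inl i))) + v (.inl (.inr (.inr i))))

/-- `v` is an orthonormal basis of `V` adapted to `U`. -/
structure IsAdapted {A B C A' B' : Type} (ω : V →ₗ⋆[ℂ] V →ₗ[ℂ] ℂ) (U : Submodule ℂ V)
    (v : ((A ⊕ B) ⊕ (C ⊕ C)) ⊕ (A' ⊕ B') → V) : Prop where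
  ortho : IsOrthoFamily ω adaptedSign v
  span_eq_top : span ℂ (Set.range v) = ⊤
  eq_span : U = span ℂ (Set.range (adaptedVec v))

lemma sumSign_ne_zero {A B : Type} (i : A ⊕ B) : sumSign i ≠ 0 := by
  rcases i with i | i <;> simp [sumSign]

lemma adaptedSign_ne_zero {A B C A' B' : Type} (i : ((A ⊕ B) ⊕ (C ⊕ C)) ⊕ (A' ⊕ B')) :
    adaptedSign i ≠ 0 := by
  rcases i with (i | i) | i <;> exact sumSign_ne_zero i

section

variable {A B C A' B' : Type} {U : Submodule ℂ V} {v : ((A ⊕ B) ⊕ (C ⊕ C)) ⊕ (A' ⊕ B') → V}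

lemma IsOrthoFamily.adaptedVec (h : IsOrthoFamily ω adaptedSign v) :
    IsOrthoFamily ω (Sum.elim sumSign fun _ => 0) (adaptedVec v) := by
  refine ⟨?_, ?_⟩
  · rintro (i | i)
    · exact h.self (.inl (.inl i))
    · simp [_root_.adaptedVec, h.self, h.ortho, adaptedSign, sumSign]
  · rintro (i | i) (j | j) hij
    · exact h.ortho _ _ (by simpa using hij)
    · simp [_root_.adaptedVec, h.ortho]
    · simp [_root_.adaptedVec, h.ortho]
    · have : i ≠ j := by simpa using hij
      simp [_root_.adaptedVec, h.ortho, this]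

variable [Fintype A] [Fintype B] [Fintype C]

lemma IsOrthoFamily.linearIndependent_adaptedVec (h : IsOrthoFamily ω adaptedSign v) :
    LinearIndependent ℂ (_root_.adaptedVec v) := by
  refine linearIndependent_of_dual (ω := ω)
    (t := Sum.elim (fun i => v (.inl (.inl i))) fun i => v (.inl (.inr (.inl i)))) ?_ ?_
  · rintro (i | i) (j | j) hij
    · exact h.ortho _ _ (by simpa using hij)
    · simp [_root_.adaptedVec, h.ortho]
    · simp [_root_.adaptedVec, h.ortho]
    · have : i ≠ j := by simpa using hij
      simp [_root_.adaptedVec, h.ortho, this]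
  · rintro (i | i)
    · simpa [_root_.adaptedVec, h.self, adaptedSign] using sumSign_ne_zero i
    · simp [_root_.adaptedVec, h.self, h.ortho, adaptedSign, sumSign]

lemma IsAdapted.finrank_eq (h : IsAdapted ω U v) :
    finrank ℂ U = Fintype.card A + Fintype.card B + Fintype.card C := by
  rw [h.eq_span, finrank_span_eq_card h.ortho.linearIndependent_adaptedVec]
  simp

variable [FiniteDimensional ℂ V]

lemma IsAdapted.posIndex_eq (h : IsAdapted ω U v) : posIndex ω U = Fintype.card A := by
  rw [h.eq_span, h.ortho.adaptedVec.posIndex_eq h.ortho.linearIndependent_adaptedVec]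
  simp [sumSign, not_lt.mpr]

lemma IsAdapted.posIndex_neg_eq (h : IsAdapted ω U v) : posIndex (-ω) U = Fintype.card B := by
  rw [h.eq_span, h.ortho.adaptedVec.neg.posIndex_eq h.ortho.linearIndependent_adaptedVec]
  simp only [Fintype.sum_sum_type]
  simp [sumSign, not_lt.mpr]

variable [Fintype A'] [Fintype B']

lemma IsAdapted.posIndex_top (h : IsAdapted ω U v) :
    posIndex ω ⊤ = Fintype.card A + Fintype.card C + Fintype.card A' := by
  rw [← h.span_eq_top, h.ortho.posIndex_eq (h.ortho.linearIndependent adaptedSign_ne_zero)]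
  simp [adaptedSign, sumSign, not_lt.mpr]

lemma IsAdapted.posIndex_neg_top (h : IsAdapted ω U v) :
    posIndex (-ω) ⊤ = Fintype.card B + Fintype.card C + Fintype.card B' := by
  rw [← h.span_eq_top, h.ortho.neg.posIndex_eq (h.ortho.linearIndependent adaptedSign_ne_zero)]
  simp only [Fintype.sum_sum_type]
  simp [adaptedSign, sumSign, not_lt.mpr]

lemma IsAdapted.exists_special_isometry {U' : Submodule ℂ V}
    {v' : ((A ⊕ B) ⊕ (C ⊕ C)) ⊕ (A' ⊕ B') → V} (h : IsAdapted ω U v) (h' : IsAdapted ω U' v') :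
    ∃ φ : V ≃ₗ[ℂ] V, (∀ x y, ω (φ x) (φ y) = ω x y) ∧ LinearMap.det (φ : V →ₗ[ℂ] V) = 1 ∧
      U.map (φ : V →ₗ[ℂ] V) = U' := by
  obtain ⟨φ, hφ, hv⟩ := h.ortho.exists_isometry h'.ortho adaptedSign_ne_zero h.span_eq_top
    h'.span_eq_top
  obtain ⟨ψ, hψ, hdet, hmap⟩ := _root_.exists_special_isometry φ hφ
    (h.ortho.norm_det_eq_one adaptedSign_ne_zero h.span_eq_top (φ := (φ : V →ₗ[ℂ] V)) hφ)
  refine ⟨ψ, hψ, hdet, ?_⟩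
  have hcomp : (φ : V →ₗ[ℂ] V) ∘ _root_.adaptedVec v = _root_.adaptedVec v' := by
    funext i
    rcases i with i | i <;> simp [_root_.adaptedVec, hv]
  rw [hmap, h.eq_span, h'.eq_span, map_span, ← Set.range_comp, hcomp]

end

lemma exists_isAdapted [FiniteDimensional ℂ V] (hω : IsHermitianForm ω) (hnd : IsNondeg ω)
    (U : Submodule ℂ V) :
    ∃ (a b c a' b' : ℕ) (v : ((Fin a ⊕ Fin b) ⊕ (Fin c ⊕ Fin c)) ⊕ (Fin a' ⊕ Fin b') → V),
      IsAdapted ω U v := by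
  obtain ⟨m, ε, s₀, hε, hs₀, hs₀U, R, hRU, hR, hsR₀, hle₀⟩ :=
    hω.exists_orthoFamily (finrank ℂ U) U le_rfl
  obtain ⟨a, b, s, hs, hrange⟩ := hs₀.exists_sumSign hε
  have hU : U = span ℂ (Set.range s) ⊔ R := by
    rw [hrange]
    refine le_antisymm hle₀ (sup_le (span_le.mpr ?_) hRU)
    rintro _ ⟨i, rfl⟩
    exact hs₀U i
  have hsR : R ≤ familyPerp ω s := by
    intro x hx
    rw [mem_familyPerp]
    intro i
    obtain ⟨j, hj⟩ : s i ∈ Set.range s₀ := hrange ▸ ⟨i, rfl⟩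
    exact hj ▸ hsR₀ x hx j
  obtain ⟨a₁, b₁, w, hw, hsw, hperp⟩ := hs.exists_extension hω hnd sumSign_ne_zero
  set P := span ℂ (Set.range (w ∘ Sum.inl)) with hP
  set N := span ℂ (Set.range (w ∘ Sum.inr)) with hN
  have hPN : familyPerp ω s = P ⊔ N := by
    rw [hperp, hP, hN, ← span_union]
    congr 1
    ext x
    simp
  have hPpos : PosDefOn ω P :=
    (hw.comp Sum.inl_injective).posDefOn_span fun i => by simp [sumSign]
  have hNneg : PosDefOn (-ω) N :=
    (hw.comp Sum.inr_injective).neg.posDefOn_span fun i => by simp [sumSign]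
  have hNiso : ∀ x ∈ N, ω x x = 0 → x = 0 := fun x hx h => hNneg.eq_zero hx (by simp [h])
  have hcross : ∀ x ∈ P, ∀ y ∈ N, ω x y = 0 := fun x hx y hy =>
    apply_eq_zero_of_mem_span (fun i j => hw.ortho _ _ (by simp)) hx hy
  obtain ⟨c, δ, e, hδ, he, heQ, R', hR'Q, hR', heR', hleQ⟩ :=
    hω.exists_orthoFamily (finrank ℂ ((R ⊔ N) ⊓ P : Submodule ℂ V)) ((R ⊔ N) ⊓ P) le_rfl
  have hR'0 : R' = ⊥ := by
    rw [eq_bot_iff]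
    intro x hx
    exact (mem_bot ℂ).mpr (hPpos.eq_zero (hR'Q hx).2 (by simp [hR' x hx x hx]))
  rw [hR'0, sup_bot_eq] at hleQ
  have heP : ∀ i, e i ∈ P := fun i => (heQ i).2
  have hδ1 : ∀ i, δ i = 1 := by
    intro i
    refine (hδ i).resolve_right fun h => ?_
    have h0 : e i = 0 := hPpos.eq_zero (heP i) (by simp [he.self, h])
    have h1 := he.self i
    rw [h0, h] at h1
    simp at h1
  have hex : ∀ i, ∃ f ∈ N, e i + f ∈ R := by
    intro i
    obtain ⟨r, hr, y, hy, hry⟩ := mem_sup.mp (heQ i).1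
    exact ⟨-y, N.neg_mem hy, by rw [← hry]; simpa using hr⟩
  choose f hfN hr using hex
  have hff : ∀ i j, ω (f i) (f j) = -ω (e i) (e j) := by
    intro i j
    have h1 := hR _ (hr i) _ (hr j)
    have h2 := hcross _ (heP i) _ (hfN j)
    have h3 := hω.apply_eq_zero (hcross _ (heP j) _ (hfN i))
    simp only [map_add, LinearMap.add_apply] at h1
    linear_combination h1 - h2 - h3
  have hef : IsOrthoFamily ω (sumSign : Fin c ⊕ Fin c → ℝ) (Sum.elim e f) := by
    refine IsOrthoFamily.sumElim hω ⟨fun i => ?_, he.ortho⟩ ⟨fun i => ?_, fun i j hij => ?_⟩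
      fun i j => hcross _ (heP i) _ (hfN j)
    · rw [he.self, hδ1]
    · rw [hff, he.self, hδ1]
      simp
    · rw [hff, he.ortho i j hij, neg_zero]
  have hefs : ∀ j, Sum.elim e f j ∈ familyPerp ω s := by
    rw [hPN]
    rintro (j | j)
    · exact mem_sup_left (heP j)
    · exact mem_sup_right (hfN j)
  have hsef := hs.sumElim hω hef fun i j => mem_familyPerp.mp (hefs j) i
  have hne : ∀ i, Sum.elim (sumSign : Fin a ⊕ Fin b → ℝ) (sumSign : Fin c ⊕ Fin c → ℝ) i ≠ 0 := by
    rintro (i | i) <;> exact sumSign_ne_zero i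
  obtain ⟨a', b', w', hw', hsw', hperp'⟩ := hsef.exists_extension hω hnd hne
  refine ⟨a, b, c, a', b', Sum.elim (Sum.elim s (Sum.elim e f)) w',
    hsef.sumElim hω hw' hsw', ?_, ?_⟩
  · rw [Set.Sum.elim_range, span_union, ← hperp', hsef.span_sup_familyPerp hne]
  · have hvec : adaptedVec (Sum.elim (Sum.elim s (Sum.elim e f)) w') =
        Sum.elim s fun i => e i + f i := rfl
    rw [hvec, Set.Sum.elim_range, span_union, hU]
    congr 1
    refine le_antisymm (fun x hx => ?_) (span_le.mpr ?_)
    · obtain ⟨y, hy, z, hz, rfl⟩ := mem_sup.mp (hPN ▸ hsR hx)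
      have hyQ : y ∈ (R ⊔ N) ⊓ P := by
        refine ⟨?_, hy⟩
        rw [← add_sub_cancel_right y z]
        exact sub_mem (mem_sup_left hx) (mem_sup_right hz)
      obtain ⟨d, hd⟩ := (mem_span_range_iff_exists_fun ℂ).mp (hleQ hyQ)
      have hdr : ∑ i, d i • (e i + f i) = y + ∑ i, d i • f i := by
        simp only [smul_add, Finset.sum_add_distrib, hd]
      have hsumN : ∑ i, d i • f i ∈ N := sum_mem fun i _ => N.smul_mem _ (hfN i)
      have hsumR : ∑ i, d i • (e i + f i) ∈ R := sum_mem fun i _ => R.smul_mem _ (hr i)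
      have hdiff : z - ∑ i, d i • f i ∈ R := by
        have := R.sub_mem hx hsumR
        rwa [hdr, add_sub_add_left_eq_sub] at this
      have hz0 := hNiso _ (N.sub_mem hz hsumN) (hR _ hdiff _ hdiff)
      rw [sub_eq_zero.mp hz0, ← hdr]
      exact sum_mem fun i _ => smul_mem _ _ (subset_span ⟨i, rfl⟩)
    · rintro _ ⟨i, rfl⟩
      exact hr i

lemma IsOrthoFamily.exists_subspace {p q a b c : ℕ} {e : Fin p ⊕ Fin q → V}
    (h : IsOrthoFamily ω sumSign e) (ht : span ℂ (Set.range e) = ⊤) (hp : a + c ≤ p)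
    (hq : b + c ≤ q) :
    ∃ (U : Submodule ℂ V)
      (v : ((Fin a ⊕ Fin b) ⊕ (Fin c ⊕ Fin c)) ⊕ (Fin (p - a - c) ⊕ Fin (q - b - c)) → V),
      IsAdapted ω U v := by
  let f : (Fin a ⊕ Fin c) ⊕ Fin (p - a - c) ≃ Fin p :=
    Fintype.equivOfCardEq (by simp; omega)
  let g : (Fin b ⊕ Fin c) ⊕ Fin (q - b - c) ≃ Fin q :=
    Fintype.equivOfCardEq (by simp; omega)
  let r : ((Fin a ⊕ Fin b) ⊕ (Fin c ⊕ Fin c)) ⊕ (Fin (p - a - c) ⊕ Fin (q - b - c)) ≃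
      Fin p ⊕ Fin q :=
    ((Equiv.sumSumSumComm _ _ _ _).sumCongr (Equiv.refl _)).trans
      ((Equiv.sumSumSumComm _ _ _ _).trans (f.sumCongr g))
  have hsign : sumSign ∘ r = adaptedSign := by
    funext i
    rcases i with ((i | i) | (i | i)) | (i | i) <;> rfl
  refine ⟨_, e ∘ r, hsign ▸ h.comp r.injective, ?_, rfl⟩
  rw [r.surjective.range_comp, ht]

/-- The possible pairs of positive and negative indices of `k`-dimensional subspaces of a space of
signature `(p, q)`. -/
def admissiblePairs (p q k : ℕ) : Finset (ℕ × ℕ) :=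
  (Finset.range (k + 1) ×ˢ Finset.range (k + 1)).filter fun x =>
    x.1 + x.2 ≤ k ∧ k ≤ x.2 + p ∧ k ≤ x.1 + q

lemma card_admissiblePairs {p q k m : ℕ} (hm : m + (k - p) + (k - q) = k) :
    (admissiblePairs p q k).card = (m + 1) * (m + 2) / 2 := by
  have hcard : (admissiblePairs p q k).card =
      ((Finset.range (m + 1)).sigma fun i => Finset.range (i + 1)).card := by
    refine Finset.card_bij' (fun x _ => ⟨x.1 - (k - q) + (x.2 - (k - p)), x.1 - (k - q)⟩)
      (fun y _ => (y.2 + (k - q), y.1 - y.2 + (k - p))) ?_ ?_ ?_ ?_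
    · rintro ⟨x, y⟩ h
      simp [admissiblePairs] at h ⊢
      omega
    · rintro ⟨x, y⟩ h
      simp [admissiblePairs] at h ⊢
      omega
    · rintro ⟨x, y⟩ h
      simp [admissiblePairs] at h ⊢
      omega
    · rintro ⟨x, y⟩ h
      simp at h ⊢
      omega
  rw [hcard, Finset.card_sigma]
  simp only [Finset.card_range]
  have h := Finset.sum_range_id (m + 2)
  rw [Finset.sum_range_succ', add_zero] at h
  rw [h, mul_comm]
  rfl

lemma card_orbits [FiniteDimensional ℂ V] (hω : IsHermitianForm ω) (hnd : IsNondeg ω) (k : ℕ) :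
    Nat.card (Quot (SameSUOrbit ω k (V := V))) =
      (admissiblePairs (posIndex ω ⊤) (posIndex (-ω) ⊤) k).card := by
  let F : Quot (SameSUOrbit ω k (V := V)) →
      admissiblePairs (posIndex ω (⊤ : Submodule ℂ V)) (posIndex (-ω) (⊤ : Submodule ℂ V)) k :=
    Quot.lift (fun U => ⟨(posIndex ω U.1, posIndex (-ω) U.1), by
      obtain ⟨a, b, c, a', b', v, hv⟩ := exists_isAdapted hω hnd U.1
      have hk := hv.finrank_eq
      rw [U.2] at hk
      rw [hv.posIndex_eq, hv.posIndex_neg_eq, hv.posIndex_top, hv.posIndex_neg_top]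
      simp only [Fintype.card_fin, admissiblePairs, Finset.mem_filter, Finset.mem_product,
        Finset.mem_range] at hk ⊢
      omega⟩) (by
      rintro A B ⟨φ, hφ, -, hmap⟩
      refine Subtype.ext ?_
      simp only [← hmap]
      rw [posIndex_map φ hφ, posIndex_map φ (ω := -ω) (by simpa using hφ)])
  have hF : Function.Bijective F := by
    refine ⟨?_, ?_⟩
    · rintro ⟨A⟩ ⟨B⟩ h
      refine Quot.sound ?_
      have h1 : posIndex ω A.1 = posIndex ω B.1 := congrArg (fun x => x.1.1) h
      have h2 : posIndex (-ω) A.1 = posIndex (-ω) B.1 := congrArg (fun x => x.1.2) h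
      obtain ⟨a, b, c, a', b', v, hv⟩ := exists_isAdapted hω hnd A.1
      obtain ⟨a₁, b₁, c₁, a₁', b₁', v₁, hv₁⟩ := exists_isAdapted hω hnd B.1
      have hk := hv.finrank_eq.symm.trans (A.2.trans (B.2.symm.trans hv₁.finrank_eq))
      have hp := hv.posIndex_top.symm.trans hv₁.posIndex_top
      have hq := hv.posIndex_neg_top.symm.trans hv₁.posIndex_neg_top
      rw [hv.posIndex_eq, hv₁.posIndex_eq] at h1
      rw [hv.posIndex_neg_eq, hv₁.posIndex_neg_eq] at h2
      simp only [Fintype.card_fin] at h1 h2 hk hp hq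
      obtain rfl := h1
      obtain rfl := h2
      obtain rfl : c = c₁ := by omega
      obtain rfl : a' = a₁' := by omega
      obtain rfl : b' = b₁' := by omega
      exact hv.exists_special_isometry hv₁
    · rintro ⟨⟨a, b⟩, hab⟩
      simp only [admissiblePairs, Finset.mem_filter, Finset.mem_product, Finset.mem_range] at hab
      have h0 : IsOrthoFamily ω (fun i : Empty => i.elim) (fun i : Empty => i.elim) :=
        ⟨fun i => i.elim, fun i => i.elim⟩
      obtain ⟨p, q, e, he, -, hspan⟩ := h0.exists_extension hω hnd fun i => i.elim
      have ht : span ℂ (Set.range e) = ⊤ := by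
        rw [← hspan]
        simp [familyPerp]
      have hp : posIndex ω (⊤ : Submodule ℂ V) = p := by
        rw [← ht, he.posIndex_eq (he.linearIndependent sumSign_ne_zero)]
        simp [sumSign, not_lt.mpr]
      have hq : posIndex (-ω) (⊤ : Submodule ℂ V) = q := by
        rw [← ht, he.neg.posIndex_eq (he.linearIndependent sumSign_ne_zero)]
        simp only [Fintype.sum_sum_type]
        simp [sumSign, not_lt.mpr]
      obtain ⟨U, v, hv⟩ := he.exists_subspace ht (a := a) (b := b) (c := k - a - b)
        (by omega) (by omega)
      have hk := hv.finrank_eq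
      simp only [Fintype.card_fin] at hk
      refine ⟨Quot.mk _ ⟨U, by omega⟩, Subtype.ext (Prod.ext ?_ ?_)⟩
      · simpa using hv.posIndex_eq
      · simpa using hv.posIndex_neg_eq
  rw [Nat.card_eq_of_bijective F hF, Nat.card_eq_fintype_card, Fintype.card_coe]

theorem card_SU_orbits_grassmannian
    [FiniteDimensional ℂ V] (n p k l : ℕ) (hn : finrank ℂ V = n) (hpn : p ≤ n) (hk : k ≤ n)
    (hl : l = min p (n - p))
    (ω : V →ₗ⋆[ℂ] V →ₗ[ℂ] ℂ) (hherm : IsHermitianForm ω) (hnd : IsNondeg ω)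
    (hsig : HasSignature ω ⊤ p (n - p) 0) :
    (n - l ≤ k → Nat.card (Quot (SameSUOrbit ω k (V := V))) = (n - k + 1) * (n - k + 2) / 2) ∧
    (l ≤ k → k ≤ n - l → Nat.card (Quot (SameSUOrbit ω k (V := V))) = (l + 1) * (l + 2) / 2) ∧
    (k ≤ l → Nat.card (Quot (SameSUOrbit ω k (V := V))) = (k + 1) * (k + 2) / 2) := by
  have hp : posIndex ω (⊤ : Submodule ℂ V) = p := hsig.1.csSup_eq
  have hq : posIndex (-ω) (⊤ : Submodule ℂ V) = n - p := by
    have h := hsig.2.1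
    simp only [negDefOn_iff] at h
    exact h.csSup_eq
  rw [card_orbits hherm hnd, hp, hq]
  exact ⟨fun h => card_admissiblePairs (by omega), fun h h' => card_admissiblePairs (by omega),
    fun h => card_admissiblePairs (by omega)⟩
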